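/- Two $k$-uniform hypergraphs $H_1, H_2$ on $n$ vertices are said to \emph{pack} if there is a bijection $f : V(H_1) \to V(H_2)$ such that $f(e) \notin E(H_2)$ for every $e \in E(H_1)$. For $n \ge k$, let $m(n,k)$ be the minimum of $|E(H_1)| + |E(H_2)|$ over all pairs of $k$-uniform hypergraphs $H_1, H_2$ on $n$ vertices that do not pack. Let $k \ge 3$ be odd. There exists a constant $c$ depending only on $k$ such that for all $n \ge k$ for which $k-i$ divides $\binom{n-i}{k-1-i}$ for all $i$ with $0 \le i \le k-2$, there exist two $k$-uniform hypergraphs $H_1$ and $H_2$, each on $n$ vertices, that do not pack and satisfy $|E(H_1)| + |E(H_2)| \le c\, n^{(k^2-k-1)/(2k-3)}$; in particular $m(n,k) \le c\, n^{(k^2-k-1)/(2k-3)}$. -/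

import Mathlib

/-- A family of edges is `k`-uniform if every edge has exactly `k` vertices. -/
def Uniform (k : ℕ) {V : Type*} (E : Finset (Finset V)) : Prop :=
  ∀ e ∈ E, e.card = k

/-- Two hypergraphs (given by their edge sets) pack if there is a bijection of the
vertex sets mapping every edge of the first to a non-edge of the second. -/
def Packs {V₁ V₂ : Type*} [DecidableEq V₂]
    (E₁ : Finset (Finset V₁)) (E₂ : Finset (Finset V₂)) : Prop :=
  ∃ f : V₁ ≃ V₂, ∀ e ∈ E₁, e.image f ∉ E₂

/-- `mMin n k` is the minimum possible value of `|E(H₁)| + |E(H₂)|` over all pairs of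
`k`-uniform hypergraphs `H₁`, `H₂` on `n` vertices that do not pack. The set is nonempty
exactly when `k ≤ n`. -/
noncomputable def mMin (n k : ℕ) : ℕ :=
  sInf {m | ∃ E₁ E₂ : Finset (Finset (Fin n)), Uniform k E₁ ∧ Uniform k E₂ ∧
    ¬ Packs E₁ E₂ ∧ E₁.card + E₂.card = m}

/-- Take `E₁` to be the `k`-sets meeting an `a`-set in at least `k - 1` points, and `E₂` a family
covering every `(k - 1)`-set that lies inside one of `p` blocks of size at most `q`. If
`p * (k - 2) < a`, the pigeonhole principle prevents `E₁` and `E₂` from packing. -/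
theorem exists_not_packs_of_blocks {n k p q a : ℕ} (hk : 2 ≤ k) (hkn : k ≤ n) (hq : 0 < q)
    (hn : n ≤ p * q) (ha : p * (k - 2) < a) (han : a ≤ n) :
    ∃ E₁ E₂ : Finset (Finset (Fin n)), Uniform k E₁ ∧ Uniform k E₂ ∧ ¬ Packs E₁ E₂ ∧
      E₁.card ≤ a ^ (k - 1) * n ∧ E₂.card ≤ p * q ^ (k - 1) := by
  classical
  obtain ⟨A, -, hA⟩ := Finset.exists_subset_card_eq (s := (Finset.univ : Finset (Fin n)))
    (n := a) (by simpa using han)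
  have hext : ∀ S : Finset (Fin n), ∃ T : Finset (Fin n), S.card = k - 1 → S ⊆ T ∧ T.card = k := by
    intro S
    by_cases hS : S.card = k - 1
    · obtain ⟨T, h1, -, h3⟩ := Finset.exists_subsuperset_card_eq (Finset.subset_univ S)
        (n := k) (by omega) (by simpa using hkn)
      exact ⟨T, fun _ => ⟨h1, h3⟩⟩
    · exact ⟨∅, fun h => absurd h hS⟩
  choose g hg using hext
  let B : ℕ → Finset (Fin n) := fun j => Finset.univ.filter fun v => v.val / q = j
  have hB : ∀ j, (B j).card ≤ q := by
    intro j
    calc (B j).card ≤ (Finset.range q).card := by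
          refine Finset.card_le_card_of_injOn (fun v => v.val % q) ?_ ?_
          · intro v _
            simpa using Nat.mod_lt _ hq
          · intro v hv w hw hvw
            simp only [B, Finset.coe_filter, Finset.mem_univ, true_and, Set.mem_ofPred_eq] at hv hw
            apply Fin.ext
            rw [← Nat.div_add_mod v.val q, ← Nat.div_add_mod w.val q, hv, hw]
            exact congrArg _ hvw
      _ = q := Finset.card_range q
  let E₁ : Finset (Finset (Fin n)) :=
    ((A.powersetCard (k - 1) ×ˢ Finset.univ).image fun x => insert x.2 x.1).filter
      fun e => e.card = k
  let E₂ : Finset (Finset (Fin n)) :=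
    ((Finset.range p).biUnion fun j => (B j).powersetCard (k - 1)).image g
  refine ⟨E₁, E₂, ?_, ?_, ?_, ?_, ?_⟩
  · intro e he
    exact (Finset.mem_filter.mp he).2
  · intro e he
    obtain ⟨S, hS, rfl⟩ := Finset.mem_image.mp he
    obtain ⟨j, -, hj⟩ := Finset.mem_biUnion.mp hS
    exact (hg S (Finset.mem_powersetCard.mp hj).2).2
  · rintro ⟨f, hf⟩
    obtain ⟨j, hj, hlt⟩ := Finset.exists_lt_card_fiber_of_mul_lt_card_of_maps_to
      (s := A.image f) (t := Finset.range p) (f := fun v : Fin n => v.val / q) (n := k - 2)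
      (fun v _ => Finset.mem_range.mpr ((Nat.div_lt_iff_lt_mul hq).mpr (v.isLt.trans_le hn)))
      (by rwa [Finset.card_range, Finset.card_image_of_injective _ f.injective, hA])
    obtain ⟨S, hS, hSc⟩ := Finset.exists_subset_card_eq (n := k - 1)
      (show k - 1 ≤ ((A.image f).filter fun v => v.val / q = j).card by omega)
    obtain ⟨hST, hT⟩ := hg S hSc
    have himg : ((g S).image f.symm).image f = g S := by
      simp [Finset.image_image]
    refine hf ((g S).image f.symm) ?_ ?_
    · have hcard : ((g S).image f.symm).card = k := by
        rw [Finset.card_image_of_injective _ f.symm.injective, hT]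
      obtain ⟨v, hv⟩ : ∃ v, g S \ S = {v} := Finset.card_eq_one.mp (by
        rw [Finset.card_sdiff_of_subset hST]; omega)
      have hgS : insert v S = g S := by
        rw [Finset.insert_eq, ← hv, Finset.sdiff_union_of_subset hST]
      refine Finset.mem_filter.mpr ⟨Finset.mem_image.mpr
        ⟨(S.image f.symm, f.symm v), ?_, ?_⟩, hcard⟩
      · refine Finset.mem_product.mpr ⟨Finset.mem_powersetCard.mpr ⟨?_, ?_⟩, Finset.mem_univ _⟩
        · intro x hx
          obtain ⟨y, hy, rfl⟩ := Finset.mem_image.mp hx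
          obtain ⟨z, hz, rfl⟩ := Finset.mem_image.mp (Finset.mem_filter.mp (hS hy)).1
          simpa using hz
        · rw [Finset.card_image_of_injective _ f.symm.injective, hSc]
      · rw [← hgS, Finset.image_insert]
    · rw [himg]
      refine Finset.mem_image_of_mem g (Finset.mem_biUnion.mpr
        ⟨j, hj, Finset.mem_powersetCard.mpr ⟨fun x hx => ?_, hSc⟩⟩)
      exact Finset.mem_filter.mpr ⟨Finset.mem_univ _, (Finset.mem_filter.mp (hS hx)).2⟩
  · calc E₁.card ≤ (A.powersetCard (k - 1) ×ˢ (Finset.univ : Finset (Fin n))).card :=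
          (Finset.card_filter_le _ _).trans Finset.card_image_le
      _ = a.choose (k - 1) * n := by
          rw [Finset.card_product, Finset.card_powersetCard, hA, Finset.card_univ, Fintype.card_fin]
      _ ≤ a ^ (k - 1) * n := Nat.mul_le_mul_right _ (Nat.choose_le_pow _ _)
  · calc E₂.card ≤ ∑ j ∈ Finset.range p, ((B j).powersetCard (k - 1)).card :=
          Finset.card_image_le.trans Finset.card_biUnion_le
      _ ≤ ∑ _j ∈ Finset.range p, q ^ (k - 1) := by
          refine Finset.sum_le_sum fun j _ => ?_
          rw [Finset.card_powersetCard]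
          exact (Nat.choose_le_pow _ _).trans (Nat.pow_le_pow_left (hB j) _)
      _ = p * q ^ (k - 1) := by simp

/-- Complete hypergraphs never pack; they suffice when `n` is bounded. -/
theorem exists_not_packs_complete {n k : ℕ} (hkn : k ≤ n) :
    ∃ E₁ E₂ : Finset (Finset (Fin n)), Uniform k E₁ ∧ Uniform k E₂ ∧ ¬ Packs E₁ E₂ ∧
      E₁.card + E₂.card ≤ 2 * 2 ^ n := by
  have hu : Uniform k ((Finset.univ : Finset (Fin n)).powersetCard k) :=
    fun e he => (Finset.mem_powersetCard.mp he).2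
  refine ⟨_, _, hu, hu, ?_, ?_⟩
  · rintro ⟨f, hf⟩
    obtain ⟨e, he⟩ := (Finset.powersetCard_nonempty (s := (Finset.univ : Finset (Fin n)))
      (n := k)).mpr (by simpa using hkn)
    refine hf e he (Finset.mem_powersetCard.mpr ⟨Finset.subset_univ _, ?_⟩)
    rw [Finset.card_image_of_injective _ f.injective, hu e he]
  · have := Nat.choose_le_two_pow n k
    simp only [Finset.card_powersetCard, Finset.card_univ, Fintype.card_fin]
    omega

theorem mMin_le {n k : ℕ} {E₁ E₂ : Finset (Finset (Fin n))} (h₁ : Uniform k E₁)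
    (h₂ : Uniform k E₂) (h : ¬ Packs E₁ E₂) : mMin n k ≤ E₁.card + E₂.card :=
  Nat.sInf_le ⟨E₁, E₂, h₁, h₂, h, rfl⟩

/-- For `n ≥ k ^ 2`, balance the block construction with about `n ^ ((k - 2) / (2 * k - 3))`
blocks. -/
theorem exists_not_packs_of_sq_le {n k : ℕ} (hk : 3 ≤ k) (hn : k ^ 2 ≤ n) :
    ∃ E₁ E₂ : Finset (Finset (Fin n)), Uniform k E₁ ∧ Uniform k E₂ ∧ ¬ Packs E₁ E₂ ∧
      ((E₁.card + E₂.card : ℕ) : ℝ) ≤ ((k : ℝ) ^ (k - 1) + 4 ^ (k - 1)) *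
          (n : ℝ) ^ (((k : ℝ) ^ 2 - (k : ℝ) - 1) / (2 * (k : ℝ) - 3)) := by
  have hkn : k ≤ n := (Nat.le_self_pow two_ne_zero k).trans hn
  have hn1 : (1 : ℝ) ≤ n := by exact_mod_cast (by omega : 1 ≤ n)
  have hn0 : (0 : ℝ) < n := by linarith
  have hk3 : (3 : ℝ) ≤ k := by exact_mod_cast hk
  have hden : (0 : ℝ) < 2 * k - 3 := by linarith
  set α : ℝ := ((k : ℝ) - 2) / (2 * k - 3) with hα
  set x : ℝ := (n : ℝ) ^ α with hx
  have hα0 : 0 ≤ α := div_nonneg (by linarith) hden.le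
  have hα2 : α ≤ 1 / 2 := by rw [hα, div_le_iff₀ hden]; linarith
  have hx1 : 1 ≤ x := Real.one_le_rpow hn1 hα0
  have hx2 : x * x ≤ n := by
    rw [hx, ← Real.rpow_add hn0]
    calc (n : ℝ) ^ (α + α) ≤ (n : ℝ) ^ (1 : ℝ) :=
          Real.rpow_le_rpow_of_exponent_le hn1 (by linarith)
      _ = n := Real.rpow_one _
  set p : ℕ := ⌊x⌋₊ with hp
  have hp1 : 1 ≤ p := Nat.one_le_floor_iff x |>.mpr hx1
  have hpx : (p : ℝ) ≤ x := Nat.floor_le (by linarith)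
  have hp1' : (1 : ℝ) ≤ p := by exact_mod_cast hp1
  have hxp : x ≤ 2 * p := by
    have := (Nat.lt_floor_add_one x).le
    rw [← hp] at this
    linarith
  have hpp : p * p ≤ n := by
    have : (p : ℝ) * p ≤ n := (mul_le_mul hpx hpx (by linarith) (by linarith)).trans hx2
    exact_mod_cast this
  have hpk : p * k ≤ n := by
    rcases le_total p k with h | h
    · exact (Nat.mul_le_mul_right k h).trans (by rwa [← sq])
    · exact (Nat.mul_le_mul_left p h).trans hpp
  have hpn : p ≤ n := (Nat.le_mul_self p).trans hpp
  obtain ⟨E₁, E₂, h₁, h₂, h, hc₁, hc₂⟩ := exists_not_packs_of_blocks (n := n) (k := k) (p := p)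
    (q := n / p + 1) (a := p * k) (by omega) hkn (Nat.succ_pos _)
    (Nat.lt_mul_div_succ n hp1).le (Nat.mul_lt_mul_of_pos_left (by omega) hp1) hpk
  refine ⟨E₁, E₂, h₁, h₂, h, ?_⟩
  set β : ℝ := ((k : ℝ) ^ 2 - (k : ℝ) - 1) / (2 * (k : ℝ) - 3) with hβ
  have hαm : α * (2 * k - 3) = k - 2 := div_mul_cancel₀ _ hden.ne'
  have hβm : β * (2 * k - 3) = (k : ℝ) ^ 2 - k - 1 := div_mul_cancel₀ _ hden.ne'
  have hkc : ((k - 1 : ℕ) : ℝ) = (k : ℝ) - 1 := by rw [Nat.cast_sub (by omega)]; simp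
  have hE₁ : (E₁.card : ℝ) ≤ (k : ℝ) ^ (k - 1) * (n : ℝ) ^ β := by
    calc (E₁.card : ℝ) ≤ ((p : ℝ) * k) ^ (k - 1) * n := by exact_mod_cast hc₁
      _ ≤ (x * k) ^ (k - 1) * n := by gcongr
      _ = (k : ℝ) ^ (k - 1) * (x ^ (k - 1) * n) := by rw [mul_pow]; ring
      _ = (k : ℝ) ^ (k - 1) * (n : ℝ) ^ β := by
          rw [hx, ← Real.rpow_natCast (_ ^ α), ← Real.rpow_mul hn0.le, hkc,
            ← Real.rpow_add_one hn0.ne']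
          congr 2
          exact mul_right_cancel₀ hden.ne' (by linear_combination ((k : ℝ) - 1) * hαm - hβm)
  have hq : ((n / p + 1 : ℕ) : ℝ) ≤ 4 * (n : ℝ) ^ (1 - α) := by
    have hdiv : ((n / p : ℕ) : ℝ) ≤ (n : ℝ) / p := Nat.cast_div_le
    have hone : (1 : ℝ) ≤ (n : ℝ) / p := by
      rw [le_div_iff₀ (by linarith), one_mul]
      exact_mod_cast hpn
    have hle : (n : ℝ) / p ≤ 2 * ((n : ℝ) / x) := by
      rw [← mul_div_assoc, div_le_div_iff₀ (by linarith) (by linarith)]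
      nlinarith
    rw [Real.rpow_sub hn0, Real.rpow_one]
    push_cast
    linarith
  have hE₂ : (E₂.card : ℝ) ≤ 4 ^ (k - 1) * (n : ℝ) ^ β := by
    calc (E₂.card : ℝ) ≤ (p : ℝ) * ((n / p + 1 : ℕ) : ℝ) ^ (k - 1) := by exact_mod_cast hc₂
      _ ≤ x * (4 * (n : ℝ) ^ (1 - α)) ^ (k - 1) := by gcongr
      _ = 4 ^ (k - 1) * (x * ((n : ℝ) ^ (1 - α)) ^ (k - 1)) := by rw [mul_pow]; ring
      _ = 4 ^ (k - 1) * (n : ℝ) ^ β := by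
          rw [hx, ← Real.rpow_natCast (_ ^ (1 - α)), ← Real.rpow_mul hn0.le, hkc,
            ← Real.rpow_add hn0]
          congr 2
          exact mul_right_cancel₀ hden.ne' (by linear_combination (2 - (k : ℝ)) * hαm - hβm)
  push_cast
  linarith

/-- For odd `k ≥ 3` there is a constant `c` depending only on `k` such that for every `n ≥ k`
with `k - i ∣ C(n - i, k - 1 - i)` for all `0 ≤ i ≤ k - 2`, there are two non-packing
`k`-uniform hypergraphs on `n` vertices with at most `c * n ^ ((k² - k - 1) / (2k - 3))` edges
in total; in particular `m(n,k)` is at most this bound. -/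
theorem stmt_2 (k : ℕ) (hk : 3 ≤ k) (hodd : Odd k) :
    ∃ c : ℝ, 0 < c ∧ ∀ n : ℕ, k ≤ n →
      (∀ i : ℕ, i ≤ k - 2 → (k - i) ∣ (n - i).choose (k - 1 - i)) →
      (∃ E₁ E₂ : Finset (Finset (Fin n)), Uniform k E₁ ∧ Uniform k E₂ ∧ ¬ Packs E₁ E₂ ∧
        ((E₁.card + E₂.card : ℕ) : ℝ) ≤
          c * (n : ℝ) ^ (((k : ℝ) ^ 2 - (k : ℝ) - 1) / (2 * (k : ℝ) - 3))) ∧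
      (mMin n k : ℝ) ≤ c * (n : ℝ) ^ (((k : ℝ) ^ 2 - (k : ℝ) - 1) / (2 * (k : ℝ) - 3)) := by
  refine ⟨(k : ℝ) ^ (k - 1) + 4 ^ (k - 1) + 2 * 2 ^ k ^ 2, by positivity, fun n hkn _ => ?_⟩
  suffices hmain : ∃ E₁ E₂ : Finset (Finset (Fin n)), Uniform k E₁ ∧ Uniform k E₂ ∧
      ¬ Packs E₁ E₂ ∧ ((E₁.card + E₂.card : ℕ) : ℝ) ≤
        ((k : ℝ) ^ (k - 1) + 4 ^ (k - 1) + 2 * 2 ^ k ^ 2) *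
          (n : ℝ) ^ (((k : ℝ) ^ 2 - (k : ℝ) - 1) / (2 * (k : ℝ) - 3)) by
    obtain ⟨E₁, E₂, h₁, h₂, h, hc⟩ := hmain
    exact ⟨⟨E₁, E₂, h₁, h₂, h, hc⟩, (Nat.cast_le.mpr (mMin_le h₁ h₂ h)).trans hc⟩
  rcases le_total (k ^ 2) n with hn | hn
  · obtain ⟨E₁, E₂, h₁, h₂, h, hc⟩ := exists_not_packs_of_sq_le hk hn
    refine ⟨E₁, E₂, h₁, h₂, h, hc.trans ?_⟩
    exact mul_le_mul_of_nonneg_right (le_add_of_nonneg_right (by positivity)) (by positivity)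
  · obtain ⟨E₁, E₂, h₁, h₂, h, hc⟩ := exists_not_packs_complete hkn
    refine ⟨E₁, E₂, h₁, h₂, h, ?_⟩
    have hk3 : (3 : ℝ) ≤ k := by exact_mod_cast hk
    have hn1 : (1 : ℝ) ≤ n := by exact_mod_cast (by omega : 1 ≤ n)
    have hpow : 1 ≤ (n : ℝ) ^ (((k : ℝ) ^ 2 - (k : ℝ) - 1) / (2 * (k : ℝ) - 3)) :=
      Real.one_le_rpow hn1 (div_nonneg (by nlinarith) (by linarith))
    have hc' : E₁.card + E₂.card ≤ 2 * 2 ^ k ^ 2 :=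
      hc.trans (Nat.mul_le_mul_left 2 (Nat.pow_le_pow_right two_pos hn))
    calc ((E₁.card + E₂.card : ℕ) : ℝ) ≤ 2 * 2 ^ k ^ 2 := by exact_mod_cast hc'
      _ ≤ (k : ℝ) ^ (k - 1) + 4 ^ (k - 1) + 2 * 2 ^ k ^ 2 :=
          le_add_of_nonneg_left (by positivity)
      _ ≤ _ := le_mul_of_one_le_right (by positivity) hpow
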